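/- For any instance I with m groups and any parameters θ, ℓ, r ∈ (0,1] with ⌈ℓm⌉ < ⌈rm⌉, there exists an instance J with m groups all of the same size such that, for each group index j, the representative location chosen by mechanism M_m(θ,ℓ,r) for the j-th group is the same in I and in J, and the position of the weighted median agent in I equals the position of the median agent in J. -/

import Mathlib

open Finset

noncomputable section

/-- A distributed facility location setting for `k` facilities and `m` groups:
`n ≥ 2` agents on the real line, partitioned into `m ≥ k` disjoint nonempty groups. -/
structure FLSetting (k m : ℕ) where
  n : ℕ
  hn : 2 ≤ n
  hmk : k ≤ m
  grp : Fin n → Fin m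
  surj : Function.Surjective grp

/-- A two-phase mechanism for `k` facilities: for each number `m` of groups, a
representative function on finite multisets of reals, and a selection function
producing the `k` facility locations from the multiset of representatives. -/
structure TwoPhase (k : ℕ) where
  rep : ℕ → Multiset ℝ → ℝ
  sel : ℕ → Multiset ℝ → Fin k → ℝ

/-- Validity of a two-phase mechanism: the representative of a nonempty multiset
is one of its elements, and the selected facility locations form a sub-multiset
of the representatives. -/
def TwoPhase.Valid {k : ℕ} (M : TwoPhase k) : Prop :=
  (∀ (m : ℕ) (S : Multiset ℝ), S ≠ 0 → M.rep m S ∈ S) ∧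
  (∀ (m : ℕ) (R : Multiset ℝ), Multiset.card R = m → k ≤ m →
    (↑(List.ofFn (M.sel m R)) : Multiset ℝ) ≤ R)

/-- The multiset of (reported) positions of the agents in group `j`. -/
def groupMS {k m : ℕ} (S : FLSetting k m) (x : Fin S.n → ℝ) (j : Fin m) : Multiset ℝ :=
  (Finset.univ.filter (fun i => S.grp i = j)).val.map x

/-- The number of agents in group `j`. -/
def groupSize {k m : ℕ} (S : FLSetting k m) (j : Fin m) : ℕ :=
  (Finset.univ.filter (fun i => S.grp i = j)).card

/-- The multiset of the `m` group representatives. -/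
def repsMS {k m : ℕ} (M : TwoPhase k) (S : FLSetting k m) (x : Fin S.n → ℝ) : Multiset ℝ :=
  (Finset.univ.val.map fun j : Fin m => M.rep m (groupMS S x j))

/-- The facility locations output by mechanism `M` on reported positions `x`. -/
def outcome {k m : ℕ} (M : TwoPhase k) (S : FLSetting k m) (x : Fin S.n → ℝ) : Fin k → ℝ :=
  M.sel m (repsMS M S x)

/-- Sum-variant individual cost: total distance to all facilities. -/
def sumCost (k : ℕ) (xi : ℝ) (y : Fin k → ℝ) : ℝ := ∑ ℓ, |xi - y ℓ|

/-- Max-variant individual cost: distance to the farthest facility. -/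
def maxCost (k : ℕ) (xi : ℝ) (y : Fin k → ℝ) : ℝ := ⨆ ℓ, |xi - y ℓ|

/-- Social cost: average over groups of the average individual cost within the group. -/
def SC {k m : ℕ} (cost : ℝ → (Fin k → ℝ) → ℝ) (S : FLSetting k m) (x : Fin S.n → ℝ)
    (y : Fin k → ℝ) : ℝ :=
  (1 / (m : ℝ)) * ∑ j : Fin m,
    (1 / (groupSize S j : ℝ)) *
      ∑ i ∈ Finset.univ.filter (fun i => S.grp i = j), cost (x i) y

/-- A feasible solution opens the `k` facilities at the positions of `k` distinct agents. -/
def Feasible {k m : ℕ} (S : FLSetting k m) (x : Fin S.n → ℝ) (y : Fin k → ℝ) : Prop :=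
  ∃ f : Fin k → Fin S.n, Function.Injective f ∧ ∀ ℓ, y ℓ = x (f ℓ)

/-- Strategyproofness with respect to an individual cost function. -/
def Strategyproof {k : ℕ} (cost : ℝ → (Fin k → ℝ) → ℝ) (M : TwoPhase k) : Prop :=
  ∀ (m : ℕ) (S : FLSetting k m) (x : Fin S.n → ℝ) (i : Fin S.n) (x' : ℝ),
    cost (x i) (outcome M S x) ≤ cost (x i) (outcome M S (Function.update x i x'))

/-- Strategyproofness restricted to instances with exactly `m` groups. -/
def StrategyproofOn {k : ℕ} (cost : ℝ → (Fin k → ℝ) → ℝ) (M : TwoPhase k) (m : ℕ) : Prop :=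
  ∀ (S : FLSetting k m) (x : Fin S.n → ℝ) (i : Fin S.n) (x' : ℝ),
    cost (x i) (outcome M S x) ≤ cost (x i) (outcome M S (Function.update x i x'))

/-- The `t`-th leftmost element of a multiset of reals (1-indexed). -/
def kthLeftmost (S : Multiset ℝ) (t : ℕ) : ℝ := (S.sort (· ≤ ·)).getD (t - 1) 0

/-- The mechanism `M_m(θ, ℓ, r)` for two facilities: each group's representative is the
position of its `⌈θ·n_g⌉`-th leftmost agent, and the facilities are opened at the
`⌈ℓm⌉`-th and `⌈rm⌉`-th leftmost representative locations. -/
def Mmech (θ l r : ℝ) : TwoPhase 2 where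
  rep := fun _ S => kthLeftmost S ⌈θ * (Multiset.card S : ℝ)⌉₊
  sel := fun m R => ![kthLeftmost R ⌈l * (m : ℝ)⌉₊, kthLeftmost R ⌈r * (m : ℝ)⌉₊]


/-- The weight of an agent: one over the size of her group. -/
def agentWeight {k m : ℕ} (S : FLSetting k m) (i : Fin S.n) : ℝ :=
  1 / (groupSize S (S.grp i) : ℝ)

/-- `i✶` is a weighted median agent: for some ranking of the agents by position
(ties broken arbitrarily), the total weight of the agents strictly before `i✶`
is less than `m/2`, and together with the weight of `i✶` it is at least `m/2`. -/
def IsWeightedMedian {k m : ℕ} (S : FLSetting k m) (x : Fin S.n → ℝ) (istar : Fin S.n) : Prop :=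
  ∃ σ : Equiv.Perm (Fin S.n), Monotone (x ∘ σ) ∧ ∃ t : Fin S.n, σ t = istar ∧
    (∑ j ∈ Finset.univ.filter (fun j => j < t), agentWeight S (σ j)) < (m : ℝ) / 2 ∧
    (m : ℝ) / 2 ≤ agentWeight S istar + ∑ j ∈ Finset.univ.filter (fun j => j < t), agentWeight S (σ j)

/-!
Only the distribution of positions inside each group matters. The representative of a group is the
`θ`-quantile of its empirical distribution, and the weighted median is an `m/2`-quantile of the sum
of these distributions over all groups. Replacing every agent of group `j` by `∏ i ≠ j, n_i` copies
at the same position preserves all empirical distributions and gives every group size `∏ i, n_i`.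
-/

section Quantile

variable {α β : Type*}

/-- `y` is a `q`-quantile of the set function `μ`. The strict bound on the left half-line is what
makes quantiles unique: `y` is the leftmost point where the mass reaches `q`. -/
def IsQuantile [Preorder α] [Preorder β] (μ : Set α → β) (q : β) (y : α) : Prop :=
  μ (Set.Iio y) < q ∧ q ≤ μ (Set.Iic y)

lemma IsQuantile.le [LinearOrder α] [Preorder β] {μ : Set α → β} (hμ : Monotone μ) {q : β}
    {y z : α} (hy : IsQuantile μ q y) (hz : IsQuantile μ q z) : y ≤ z := by
  by_contra! hzy
  have : q < q := calc
    q ≤ μ (Set.Iic z) := hz.2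
    _ ≤ μ (Set.Iio y) := hμ (Set.Iic_subset_Iio.2 hzy)
    _ < q := hy.1
  exact this.false

lemma IsQuantile.unique [LinearOrder α] [Preorder β] {μ : Set α → β} (hμ : Monotone μ) {q : β}
    {y z : α} (hy : IsQuantile μ q y) (hz : IsQuantile μ q z) : y = z :=
  le_antisymm (hy.le hμ hz) (hz.le hμ hy)

end Quantile

section SortedList

variable {α : Type*} [LinearOrder α] {L : List α} {p : ℕ}

lemma countP_lt_getElem_le (hL : L.SortedLE) (hp : p < L.length) :
    L.countP (· < L[p]) ≤ p := by
  have hdrop : (L.drop p).countP (· < L[p]) = 0 := by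
    simp only [List.countP_eq_zero, decide_eq_true_eq, not_lt, List.mem_iff_getElem]
    rintro _ ⟨i, hi, rfl⟩
    rw [List.getElem_drop]
    exact hL.getElem_le_getElem_of_le (Nat.le_add_right p i)
  calc L.countP (· < L[p])
      = (L.take p).countP (· < L[p]) + (L.drop p).countP (· < L[p]) := by
        rw [← List.countP_append, List.take_append_drop]
    _ = (L.take p).countP (· < L[p]) := by rw [hdrop, add_zero]
    _ ≤ (L.take p).length := List.countP_le_length
    _ ≤ p := List.length_take_le p L

lemma succ_le_countP_le_getElem (hL : L.SortedLE) (hp : p < L.length) :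
    p + 1 ≤ L.countP (· ≤ L[p]) := by
  have htake : (L.take (p + 1)).countP (· ≤ L[p]) = (L.take (p + 1)).length := by
    simp only [List.countP_eq_length, decide_eq_true_eq, List.mem_iff_getElem]
    rintro _ ⟨i, hi, rfl⟩
    rw [List.getElem_take]
    rw [List.length_take] at hi
    exact hL.getElem_le_getElem_of_le (by omega)
  have hcount : (L.take (p + 1)).countP (· ≤ L[p]) = p + 1 :=
    htake.trans (List.length_take_of_le hp)
  exact hcount.ge.trans (List.take_sublist (p + 1) L).countP_le

end SortedList

section Empirical

open scoped Classical in
lemma countP_mem_mono {α : Type*} (G : Multiset α) :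
    Monotone fun A : Set α => G.countP (· ∈ A) := by
  intro A B hAB
  simp only [Multiset.countP_eq_card_filter]
  exact Multiset.card_le_card (Multiset.monotone_filter_right G hAB)

open scoped Classical in
/-- The empirical distribution of a multiset: the fraction of its elements that lie in `A`
(`0` if the multiset is empty). -/
def empiricalFreq {α : Type*} (G : Multiset α) (A : Set α) : ℝ :=
  (G.countP (· ∈ A) : ℝ) / (Multiset.card G : ℝ)

lemma empiricalFreq_mono {α : Type*} (G : Multiset α) : Monotone (empiricalFreq G) :=
  fun _ _ hAB => div_le_div_of_nonneg_right (Nat.cast_le.2 (countP_mem_mono G hAB))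
    (Nat.cast_nonneg _)

lemma empiricalFreq_nsmul {α : Type*} (G : Multiset α) {c : ℕ} (hc : c ≠ 0) :
    empiricalFreq (c • G) = empiricalFreq G := by
  ext A
  simp only [empiricalFreq, Multiset.countP_nsmul, Multiset.card_nsmul, Nat.cast_mul]
  exact mul_div_mul_left _ _ (Nat.cast_ne_zero.2 hc)

open scoped Classical in
lemma isQuantile_kthLeftmost {G : Multiset ℝ} {t : ℕ} (ht : t ≠ 0) (htG : t ≤ Multiset.card G) :
    IsQuantile (fun A => G.countP (· ∈ A)) t (kthLeftmost G t) := by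
  obtain ⟨p, rfl⟩ := Nat.exists_eq_succ_of_ne_zero ht
  have hp : p < (G.sort (· ≤ ·)).length := by rwa [Multiset.length_sort]
  have hsorted : (G.sort (· ≤ ·)).SortedLE := (Multiset.pairwise_sort G _).sortedLE
  have hkth : kthLeftmost G (p + 1) = (G.sort (· ≤ ·))[p] := List.getD_eq_getElem _ _ hp
  have hcount (P : ℝ → Prop) [DecidablePred P] :
      G.countP P = (G.sort (· ≤ ·)).countP P := by
    rw [← Multiset.coe_countP, Multiset.sort_eq]
  simp only [IsQuantile, Set.mem_Iio, Set.mem_Iic, hkth, hcount]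
  constructor
  · convert Nat.lt_succ_of_le (countP_lt_getElem_le hsorted hp)
  · convert succ_le_countP_le_getElem hsorted hp

/-- The element of relative rank `θ` of a multiset: the representative that `Mmech θ l r` chooses
for a group whose agents are located at `G`. -/
def leftQuantile (θ : ℝ) (G : Multiset ℝ) : ℝ :=
  kthLeftmost G ⌈θ * (Multiset.card G : ℝ)⌉₊

lemma isQuantile_leftQuantile {θ : ℝ} (hθ : θ ∈ Set.Ioc (0 : ℝ) 1) {G : Multiset ℝ}
    (hG : G ≠ 0) : IsQuantile (empiricalFreq G) θ (leftQuantile θ G) := by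
  have hcard : (0 : ℝ) < Multiset.card G := Nat.cast_pos.2 (Multiset.card_pos.2 hG)
  have hrank_ne : ⌈θ * (Multiset.card G : ℝ)⌉₊ ≠ 0 := (Nat.ceil_pos.2 (mul_pos hθ.1 hcard)).ne'
  have hrank_le : ⌈θ * (Multiset.card G : ℝ)⌉₊ ≤ Multiset.card G :=
    Nat.ceil_le.2 (mul_le_of_le_one_left hcard.le hθ.2)
  obtain ⟨hlt, hle⟩ := isQuantile_kthLeftmost hrank_ne hrank_le
  exact ⟨(div_lt_iff₀ hcard).2 (Nat.lt_ceil.1 hlt), (le_div_iff₀ hcard).2 (Nat.ceil_le.1 hle)⟩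

lemma leftQuantile_congr {θ : ℝ} (hθ : θ ∈ Set.Ioc (0 : ℝ) 1) {G H : Multiset ℝ}
    (hG : G ≠ 0) (hH : H ≠ 0) (hGH : empiricalFreq G = empiricalFreq H) :
    leftQuantile θ G = leftQuantile θ H :=
  (isQuantile_leftQuantile hθ hG).unique (empiricalFreq_mono G)
    (hGH ▸ isQuantile_leftQuantile hθ hH)

end Empirical

section Setting

variable {k m : ℕ}

lemma card_groupMS (S : FLSetting k m) (x : Fin S.n → ℝ) (j : Fin m) :
    Multiset.card (groupMS S x j) = groupSize S j :=
  Multiset.card_map _ _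

lemma groupSize_pos (S : FLSetting k m) (j : Fin m) : 0 < groupSize S j := by
  obtain ⟨i, hi⟩ := S.surj j
  exact Finset.card_pos.2 ⟨i, Finset.mem_filter.2 ⟨Finset.mem_univ i, hi⟩⟩

lemma groupMS_ne_zero (S : FLSetting k m) (x : Fin S.n → ℝ) (j : Fin m) :
    groupMS S x j ≠ 0 := by
  rw [← Multiset.card_pos, card_groupMS]
  exact groupSize_pos S j

lemma sum_groupSize (S : FLSetting k m) : ∑ j, groupSize S j = S.n := by
  simp only [groupSize, Finset.sum_card_fiberwise_eq_card_filter, Finset.mem_univ,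
    Finset.filter_true, Finset.card_univ, Fintype.card_fin]

lemma agentWeight_nonneg (S : FLSetting k m) (i : Fin S.n) : 0 ≤ agentWeight S i :=
  one_div_nonneg.2 (Nat.cast_nonneg _)

lemma exists_groupMS_eq_map {ι : Type*} [Fintype ι] (hkm : k ≤ m) (hι : 2 ≤ Fintype.card ι)
    {g : ι → Fin m} (hg : Function.Surjective g) (p : ι → ℝ) :
    ∃ (S : FLSetting k m) (x : Fin S.n → ℝ),
      ∀ j, groupMS S x j = (Finset.univ.filter fun i => g i = j).val.map p := by
  let e : Fin (Fintype.card ι) ≃ ι := (Fintype.equivFin ι).symm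
  refine ⟨⟨_, hι, hkm, g ∘ e, hg.comp e.surjective⟩, p ∘ e, fun j => ?_⟩
  rw [← Finset.map_univ_equiv e, Finset.filter_map, Finset.map_val, Multiset.map_map]
  rfl

lemma exists_groupMS_eq (hkm : k ≤ m) {G : Fin m → Multiset ℝ} (hG : ∀ j, G j ≠ 0)
    (hcard : 2 ≤ ∑ j, Multiset.card (G j)) :
    ∃ (S : FLSetting k m) (x : Fin S.n → ℝ), ∀ j, groupMS S x j = G j := by
  have hsurj : Function.Surjective (Sigma.fst : (Σ j, G j) → Fin m) := fun j =>
    have ⟨a, ha⟩ := Multiset.exists_mem_of_ne_zero (hG j)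
    ⟨⟨j, a, 0, Multiset.count_pos.2 ha⟩, rfl⟩
  have hι : 2 ≤ Fintype.card (Σ j, G j) := by
    simpa only [Fintype.card_sigma, Multiset.card_coe] using hcard
  obtain ⟨S, x, hS⟩ := exists_groupMS_eq_map hkm hι hsurj fun a => (a.2 : ℝ)
  refine ⟨S, x, fun j => (hS j).trans ?_⟩
  have hfiber : (Finset.univ.filter fun a : Σ j, G j => a.1 = j) =
      Finset.univ.map (Function.Embedding.sigmaMk j) := by
    ext ⟨i, a⟩
    constructor
    · intro h
      obtain rfl : i = j := (Finset.mem_filter.1 h).2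
      exact Finset.mem_map_of_mem _ (Finset.mem_univ a)
    · intro h
      obtain ⟨b, -, hb⟩ := Finset.mem_map.1 h
      exact Finset.mem_filter.2 ⟨Finset.mem_univ _, (congrArg Sigma.fst hb).symm⟩
  rw [hfiber, Finset.map_val, Multiset.map_map]
  exact Multiset.map_univ_coe (G j)

lemma exists_groupMS_eq_nsmul (S : FLSetting k m) (x : Fin S.n → ℝ) {c : Fin m → ℕ}
    (hc : ∀ j, c j ≠ 0) :
    ∃ (S' : FLSetting k m) (x' : Fin S'.n → ℝ), ∀ j, groupMS S' x' j = c j • groupMS S x j := by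
  have hcard (j : Fin m) : Multiset.card (c j • groupMS S x j) = c j * groupSize S j := by
    rw [Multiset.card_nsmul, card_groupMS]
  refine exists_groupMS_eq S.hmk (fun j => ?_) ?_
  · rw [← Multiset.card_pos, hcard]
    exact Nat.mul_pos (Nat.pos_of_ne_zero (hc j)) (groupSize_pos S j)
  · calc 2 ≤ S.n := S.hn
      _ = ∑ j, groupSize S j := (sum_groupSize S).symm
      _ ≤ ∑ j, Multiset.card (c j • groupMS S x j) := Finset.sum_le_sum fun j _ =>
        hcard j ▸ Nat.le_mul_of_pos_left _ (Nat.pos_of_ne_zero (hc j))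

lemma exists_groupSize_eq_empiricalFreq_eq (S : FLSetting k m) (x : Fin S.n → ℝ) :
    ∃ (S' : FLSetting k m) (x' : Fin S'.n → ℝ),
      (∀ j j', groupSize S' j = groupSize S' j') ∧
      ∀ j, empiricalFreq (groupMS S' x' j) = empiricalFreq (groupMS S x j) := by
  let c (j : Fin m) : ℕ := ∏ i ∈ Finset.univ.erase j, groupSize S i
  have hc (j : Fin m) : c j ≠ 0 := Finset.prod_ne_zero_iff.2 fun i _ => (groupSize_pos S i).ne'
  obtain ⟨S', x', hS'⟩ := exists_groupMS_eq_nsmul S x hc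
  have hsize (j : Fin m) : groupSize S' j = ∏ i, groupSize S i := by
    rw [← card_groupMS S' x', hS', Multiset.card_nsmul, card_groupMS]
    exact Finset.prod_erase_mul _ _ (Finset.mem_univ j)
  refine ⟨S', x', fun j j' => (hsize j).trans (hsize j').symm, fun j => ?_⟩
  rw [hS', empiricalFreq_nsmul _ (hc j)]

open scoped Classical in
/-- The total weight of the agents located in `A`. -/
def positionWeight (S : FLSetting k m) (x : Fin S.n → ℝ) (A : Set ℝ) : ℝ :=
  ∑ i with x i ∈ A, agentWeight S i

open scoped Classical in
lemma positionWeight_mono (S : FLSetting k m) (x : Fin S.n → ℝ) :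
    Monotone (positionWeight S x) := fun _ _ hAB =>
  Finset.sum_le_sum_of_subset_of_nonneg (Finset.monotone_filter_right _ fun _ _ hi => hAB hi)
    fun i _ _ => agentWeight_nonneg S i

lemma positionWeight_eq_sum_empiricalFreq (S : FLSetting k m) (x : Fin S.n → ℝ) (A : Set ℝ) :
    positionWeight S x A = ∑ j, empiricalFreq (groupMS S x j) A := by
  classical
  rw [positionWeight, ← Finset.sum_fiberwise _ S.grp]
  refine Finset.sum_congr rfl fun j _ => ?_
  have hweight : ∀ i ∈ (Finset.univ.filter fun i => x i ∈ A).filter fun i => S.grp i = j,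
      agentWeight S i = 1 / (groupSize S j : ℝ) := fun i hi => by
    rw [agentWeight, (Finset.mem_filter.1 hi).2]
  have hcount : ((Finset.univ.filter fun i => x i ∈ A).filter fun i => S.grp i = j).card =
      (groupMS S x j).countP (· ∈ A) := by
    rw [Finset.filter_comm, groupMS, Multiset.countP_map, ← Finset.filter_val, Finset.card_val]
  rw [Finset.sum_congr rfl hweight, Finset.sum_const, nsmul_eq_mul, mul_one_div, hcount,
    empiricalFreq, card_groupMS]

open scoped Classical in
lemma positionWeight_eq_sum_perm (S : FLSetting k m) (x : Fin S.n → ℝ)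
    (σ : Equiv.Perm (Fin S.n)) (A : Set ℝ) :
    positionWeight S x A = ∑ i with x (σ i) ∈ A, agentWeight S (σ i) := by
  rw [positionWeight, Finset.sum_filter, Finset.sum_filter]
  exact (Equiv.sum_comp σ fun i => if x i ∈ A then agentWeight S i else 0).symm

lemma IsWeightedMedian.isQuantile {S : FLSetting k m} {x : Fin S.n → ℝ} {i : Fin S.n}
    (h : IsWeightedMedian S x i) : IsQuantile (positionWeight S x) ((m : ℝ) / 2) (x i) := by
  classical
  obtain ⟨σ, hσ, t, rfl, hlt, hle⟩ := h
  have hleft : (Finset.univ.filter fun j => x (σ j) ∈ Set.Iio (x (σ t))) ⊆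
      Finset.univ.filter fun j => j < t :=
    Finset.monotone_filter_right _ fun _ _ hj => hσ.reflect_lt hj
  have hright : insert t (Finset.univ.filter fun j => j < t) ⊆
      Finset.univ.filter fun j => x (σ j) ∈ Set.Iic (x (σ t)) := fun j hj => by
    simp only [Finset.mem_insert, Finset.mem_filter, Finset.mem_univ, true_and] at hj
    exact Finset.mem_filter.2 ⟨Finset.mem_univ j, hσ (le_iff_eq_or_lt.2 hj)⟩
  rw [IsQuantile, positionWeight_eq_sum_perm S x σ, positionWeight_eq_sum_perm S x σ]
  constructor
  · exact (Finset.sum_le_sum_of_subset_of_nonneg hleft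
      fun _ _ _ => agentWeight_nonneg S _).trans_lt hlt
  · rw [← Finset.sum_insert (f := fun j => agentWeight S (σ j)) (by simp)] at hle
    exact hle.trans (Finset.sum_le_sum_of_subset_of_nonneg hright
      fun _ _ _ => agentWeight_nonneg S _)

lemma IsWeightedMedian.position_eq {S S' : FLSetting k m} {x : Fin S.n → ℝ}
    {x' : Fin S'.n → ℝ} {i : Fin S.n} {i' : Fin S'.n}
    (hfreq : ∀ j, empiricalFreq (groupMS S' x' j) = empiricalFreq (groupMS S x j))
    (h : IsWeightedMedian S x i) (h' : IsWeightedMedian S' x' i') : x i = x' i' := by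
  have hweight : positionWeight S' x' = positionWeight S x := by
    ext A
    simp only [positionWeight_eq_sum_empiricalFreq, hfreq]
  exact h.isQuantile.unique (positionWeight_mono S x) (hweight ▸ h'.isQuantile)

theorem stmt1_general (S : FLSetting k m) (x : Fin S.n → ℝ) :
    ∃ (S' : FLSetting k m) (x' : Fin S'.n → ℝ),
      (∀ j j' : Fin m, groupSize S' j = groupSize S' j') ∧
      (∀ θ ∈ Set.Ioc (0 : ℝ) 1, ∀ j : Fin m,
        leftQuantile θ (groupMS S' x' j) = leftQuantile θ (groupMS S x j)) ∧
      (∀ (i : Fin S.n) (i' : Fin S'.n),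
        IsWeightedMedian S x i → IsWeightedMedian S' x' i' → x i = x' i') := by
  obtain ⟨S', x', hsize, hfreq⟩ := exists_groupSize_eq_empiricalFreq_eq S x
  exact ⟨S', x', hsize,
    fun _ hθ j => leftQuantile_congr hθ (groupMS_ne_zero S' x' j) (groupMS_ne_zero S x j) (hfreq j),
    fun _ _ => IsWeightedMedian.position_eq hfreq⟩

end Setting

/-- For any instance with `m` groups, there is an instance with `m` groups all of the
same size in which each group gets the same representative under `M_m(θ,ℓ,r)`, and whose
median agent has the same position as the weighted median agent of the original instance. -/
theorem stmt1 (m : ℕ) (hm : 2 ≤ m) (θ l r : ℝ)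
    (hθ : θ ∈ Set.Ioc (0 : ℝ) 1) (hl : l ∈ Set.Ioc (0 : ℝ) 1) (hr : r ∈ Set.Ioc (0 : ℝ) 1)
    (hlr : ⌈l * (m : ℝ)⌉₊ < ⌈r * (m : ℝ)⌉₊)
    (S : FLSetting 2 m) (x : Fin S.n → ℝ) :
    ∃ (S' : FLSetting 2 m) (x' : Fin S'.n → ℝ),
      (∀ j j' : Fin m, groupSize S' j = groupSize S' j') ∧
      (∀ j : Fin m, (Mmech θ l r).rep m (groupMS S' x' j) = (Mmech θ l r).rep m (groupMS S x j)) ∧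
      (∀ (i : Fin S.n) (i' : Fin S'.n),
        IsWeightedMedian S x i → IsWeightedMedian S' x' i' → x i = x' i') := by
  have ⟨S', x', hsize, hrep, hmedian⟩ := stmt1_general S x
  exact ⟨S', x', hsize, hrep θ hθ, hmedian⟩

end
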